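/- Let μ_α and μ_β satisfy Assumption 2 and let E^α be an atom of μ̂_α (equivalently, a zero of m_{μ_α} lying at strictly positive distance from supp(μ_α), with μ̂_α({E^α}) = 1/m_{μ_α}'(E^α)). Then: (1) if ∫_ℝ x² dμ_β(x) > μ̂_α({E^α}), then E^α does not belong to ω_β(ℝ), the range on ℝ of the continuous extension of ω_β; (2) if ∫_ℝ x² dμ_β(x) < μ̂_α({E^α}), then E^α ∈ ω_β(ℝ) and E^α ∉ supp(μ_α ⊞ μ_β); (3) if ∫_ℝ x² dμ_β(x) = μ̂_α({E^α}), then E^α ∈ ω_β(ℝ). The same statements hold with α and β interchanged. -/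

import Mathlib

open MeasureTheory Topology Filter Set

noncomputable section

/-- The open upper half-plane ℂ⁺. -/
def UHP : Set ℂ := {z : ℂ | 0 < z.im}

/-- The closed upper half-plane ℂ⁺ ∪ ℝ. -/
def CUHP : Set ℂ := {z : ℂ | 0 ≤ z.im}

/-- Cauchy–Stieltjes transform `m_μ(z) = ∫ 1/(x−z) dμ(x)`. -/
def stT (μ : Measure ℝ) (z : ℂ) : ℂ := ∫ x, ((x : ℂ) - z)⁻¹ ∂μ

/-- Real-valued Cauchy–Stieltjes transform at real points (outside the support). -/
def stTR (μ : Measure ℝ) (E : ℝ) : ℝ := ∫ x, (x - E)⁻¹ ∂μ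

/-- Negative reciprocal Cauchy–Stieltjes transform `F_μ = −1/m_μ`. -/
def nrT (μ : Measure ℝ) (z : ℂ) : ℂ := -(stT μ z)⁻¹

/-- Support of a Borel measure on ℝ (the smallest closed set of full measure). -/
def msupp (μ : Measure ℝ) : Set ℝ := {x : ℝ | ∀ ε > 0, 0 < μ (Set.Ioo (x - ε) (x + ε))}

/-- Absolutely continuous part of μ with respect to Lebesgue measure. -/
def acPart (μ : Measure ℝ) : Measure ℝ := volume.withDensity (μ.rnDeriv volume)

/-- `I_μ(ω) = ∫ 1/|x−ω|² dμ(x)`. -/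
def Ifun (μ : Measure ℝ) (w : ℂ) : ℝ := ∫ x, (Complex.normSq ((x : ℂ) - w))⁻¹ ∂μ

/-- A sequence of the upper half-plane converging non-tangentially to `E ∈ ℝ`. -/
def NonTangentialSeq (z : ℕ → ℂ) (E : ℝ) : Prop :=
  (∀ n, z n ∈ UHP) ∧ Tendsto z atTop (𝓝 (E : ℂ)) ∧
    ∃ C : ℝ, ∀ n, |(z n).re - E| ≤ C * (z n).im

/-- The density `ρ_μ` of the a.c. part of `μ` vanishes at `x`
(via the Stieltjes inversion formula). -/
def densityVanishesAt (μ : Measure ℝ) (x : ℝ) : Prop :=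
  Tendsto (fun η : ℝ => (stT μ ((x : ℂ) + (η : ℂ) * Complex.I)).im) (𝓝[>] 0) (𝓝 0)

/-- The density `ρ_μ` of the a.c. part of `μ` diverges at `x`. -/
def densityDivergesAt (μ : Measure ℝ) (x : ℝ) : Prop :=
  Tendsto (fun η : ℝ => (stT μ ((x : ℂ) + (η : ℂ) * Complex.I)).im) (𝓝[>] 0) atTop

/-- Assumption 1. -/
structure Assumption1 (μ : Measure ℝ) (nac npp nppout : ℕ)
    (Em Ep : Fin nac → ℝ) (atom : Fin npp → ℝ) (ρ : ℝ → ℝ) : Prop where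
  prob : IsProbabilityMeasure μ
  compact : IsCompact (msupp μ)
  nac_pos : 1 ≤ nac
  npp_pos : 1 ≤ npp
  ρ_nonneg : ∀ x, 0 ≤ ρ x
  ac_density : acPart μ = volume.withDensity fun x => ENNReal.ofReal (ρ x)
  sing_atomic : μ.singularPart volume = ∑ j : Fin npp, μ {atom j} • Measure.dirac (atom j)
  atom_inj : Function.Injective atom
  atom_pos : ∀ j, 0 < μ {atom j}
  lt : ∀ j, Em j < Ep j
  ordered : ∀ i j : Fin nac, i < j → Ep i < Em j
  supp_ac : msupp (acPart μ) = ⋃ j, Set.Icc (Em j) (Ep j)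
  out_card : Nat.card {j : Fin npp // atom j ∉ msupp (acPart μ)} = nppout
  no_atom_endpoint : ∀ j i, atom j ≠ Em i ∧ atom j ≠ Ep i
  power_law : ∀ j, ∃ tm tp C : ℝ, -1 < tm ∧ tm < 1 ∧ -1 < tp ∧ tp < 1 ∧ 1 ≤ C ∧
    ∀ᵐ x ∂volume, x ∈ Set.Icc (Em j) (Ep j) →
      C⁻¹ < ρ x / ((x - Em j) ^ tm * (Ep j - x) ^ tp) ∧
      ρ x / ((x - Em j) ^ tm * (Ep j - x) ^ tp) < C

/-- The subordination function `ω_t` for the free convolution semi-group,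
together with its continuous extension to `ℂ⁺ ∪ ℝ`. -/
structure IsSubordT (μ : Measure ℝ) (t : ℝ) (ω : ℂ → ℂ) : Prop where
  diff : DifferentiableOn ℂ ω UHP
  maps : ∀ z ∈ UHP, ω z ∈ UHP
  imLe : ∀ z ∈ UHP, z.im ≤ (ω z).im
  limTop : Tendsto (fun η : ℝ => ω ((η : ℂ) * Complex.I) / ((η : ℂ) * Complex.I))
      atTop (𝓝 1)
  eqn : ∀ z ∈ UHP, (t : ℂ) * ω z - z = ((t : ℂ) - 1) * nrT μ (ω z)
  cont : ContinuousOn ω CUHP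

/-- `μt = μ^{⊞ t}`: the probability measure whose negative reciprocal Cauchy–Stieltjes
transform is `F_μ ∘ ω_t`, i.e. whose Cauchy–Stieltjes transform is `m_μ ∘ ω_t`. -/
def IsFreePow (μ : Measure ℝ) (ω : ℂ → ℂ) (μt : Measure ℝ) : Prop :=
  IsProbabilityMeasure μt ∧ ∀ z ∈ UHP, stT μt z = stT μ (ω z)

/-- Assumption 2 (for one of the two measures). -/
structure Assumption2 (μ : Measure ℝ) (n : ℕ) (Am Ap : Fin n → ℝ) (ρ : ℝ → ℝ) : Prop where
  prob : IsProbabilityMeasure μ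
  n_pos : 1 ≤ n
  centered : ∫ x, x ∂μ = 0
  ρ_nonneg : ∀ x, 0 ≤ ρ x
  ac : μ = volume.withDensity fun x => ENNReal.ofReal (ρ x)
  lt : ∀ j, Am j < Ap j
  ordered : ∀ i j : Fin n, i < j → Ap i < Am j
  supp_eq : msupp μ = ⋃ j, Set.Icc (Am j) (Ap j)
  power_law : ∀ j, ∃ sm sp C : ℝ, -1 < sm ∧ sm < 1 ∧ -1 < sp ∧ sp < 1 ∧ 1 ≤ C ∧
    ∀ᵐ x ∂volume, x ∈ Set.Icc (Am j) (Ap j) →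
      C⁻¹ < ρ x / ((x - Am j) ^ sm * (Ap j - x) ^ sp) ∧
      ρ x / ((x - Am j) ^ sm * (Ap j - x) ^ sp) < C

/-- The pair of subordination functions for the free additive convolution `μa ⊞ μb`. -/
structure IsSubordPair (μa μb : Measure ℝ) (ωa ωb : ℂ → ℂ) : Prop where
  diff_a : DifferentiableOn ℂ ωa UHP
  diff_b : DifferentiableOn ℂ ωb UHP
  maps_a : ∀ z ∈ UHP, ωa z ∈ UHP
  maps_b : ∀ z ∈ UHP, ωb z ∈ UHP
  imLe_a : ∀ z ∈ UHP, z.im ≤ (ωa z).im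
  imLe_b : ∀ z ∈ UHP, z.im ≤ (ωb z).im
  lim_a : Tendsto (fun η : ℝ => ωa ((η : ℂ) * Complex.I) / ((η : ℂ) * Complex.I))
      atTop (𝓝 1)
  lim_b : Tendsto (fun η : ℝ => ωb ((η : ℂ) * Complex.I) / ((η : ℂ) * Complex.I))
      atTop (𝓝 1)
  eqn_a : ∀ z ∈ UHP, ωa z + ωb z - z = nrT μa (ωb z)
  eqn_b : ∀ z ∈ UHP, ωa z + ωb z - z = nrT μb (ωa z)

/-- `μab = μa ⊞ μb`: the probability measure whose negative reciprocal Cauchy–Stieltjes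
transform is `F_{μa} ∘ ω_b`, i.e. whose Cauchy–Stieltjes transform is `m_{μa} ∘ ω_b`. -/
def IsFreeConv (μa μb : Measure ℝ) (ωb : ℂ → ℂ) (μab : Measure ℝ) : Prop :=
  IsProbabilityMeasure μab ∧ ∀ z ∈ UHP, stT μab z = stT μa (ωb z)

/-- `Ω` is the continuous extension of `ω` to `ℂ⁺ ∪ ℝ`, with values in the
Riemann sphere `ℂ ∪ {∞}`. -/
def ExtendsToRP (ω : ℂ → ℂ) (Ω : ℂ → OnePoint ℂ) : Prop :=
  ContinuousOn Ω CUHP ∧ ∀ z ∈ UHP, Ω z = (ω z : OnePoint ℂ)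

/-- `μhat` is the measure in the Nevanlinna representation
`F_μ(ω) − ω = −∫ x dμ + ∫ 1/(x−ω) dμ̂(x)`. -/
def IsNevanHat (μ μhat : Measure ℝ) : Prop :=
  IsFiniteMeasure μhat ∧ ∀ z ∈ UHP,
    nrT μ z - z = -((∫ x, x ∂μ : ℝ) : ℂ) + ∫ x, ((x : ℂ) - z)⁻¹ ∂μhat

end

open ProbabilityTheory
open scoped ComplexConjugate

/-!
Write `I_μ(w) = ∫ |x - w|⁻² dμ` and `p = μ̂_α({E})`, so that `p = I_{μ_α}(E)⁻¹`. Taking imaginary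
parts in the subordination equations gives, on `ℂ⁺`,
`I_{μ_α ⊞ μ_β}(z)⁻¹ = I_{μ_α}(ω_β)⁻¹ - (|m_{μ_β}(ω_α)|⁻² - I_{μ_β}(ω_α)⁻¹)`.
Where `ω_β → E`, the zero of `m_{μ_α}` forces `ω_α → ∞`, and the right-hand side tends to
`p - Var μ_β`. The left-hand side is nonnegative, hence `Var μ_β ≤ p` whenever `E` is in the range;
if `Var μ_β < p`, then `I_{μ_α ⊞ μ_β}` stays bounded, so the point is not in the support.

Conversely let `Var μ_β ≤ p`. As `z` descends vertically to `E` plus the mean of `μ_β`, a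
Cauchy–Schwarz bound on `F_{μ_β}` and the atom of `μ̂_α` trap `ω_β(z)` in a compact truncated cone
with apex `E`. A limit value in `ℂ⁺` contradicts the strictness of Cauchy–Schwarz, and the only
other point of the cone is `E`.
-/

/-! ### The half-plane and the support -/

theorem UHP_subset_CUHP : UHP ⊆ CUHP := fun z (hz : 0 < z.im) => hz.le

theorem nhdsWithin_UHP_neBot {z : ℂ} (hz : z ∈ CUHP) : (𝓝[UHP] z).NeBot := by
  rw [← mem_closure_iff_nhdsWithin_neBot]
  exact (Complex.closure_setOfPred_lt_im 0).symm ▸ hz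

theorem tendsto_add_mul_I (x : ℝ) :
    Tendsto (fun η : ℝ => (x : ℂ) + η * Complex.I) (𝓝[>] 0) (𝓝[UHP] x) := by
  refine tendsto_nhdsWithin_iff.2 ⟨?_, ?_⟩
  · have h : ContinuousAt (fun η : ℝ => (x : ℂ) + η * Complex.I) 0 := by fun_prop
    simpa using h.tendsto.mono_left nhdsWithin_le_nhds
  · filter_upwards [self_mem_nhdsWithin] with η hη
    simpa [UHP] using hη

theorem msupp_eq_support (μ : Measure ℝ) : msupp μ = μ.support := by
  ext x
  exact ((nhds_basis_Ioo_pos x).mem_measureSupport).symm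

theorem ae_mem_msupp (μ : Measure ℝ) : ∀ᵐ x ∂μ, x ∈ msupp μ :=
  msupp_eq_support μ ▸ μ.support_mem_ae

theorem exists_ae_abs_le_of_isBounded_msupp {μ : Measure ℝ} (h : Bornology.IsBounded (msupp μ)) :
    ∃ R : ℝ, ∀ᵐ x ∂μ, |x| ≤ R := by
  obtain ⟨R, hR⟩ := h.exists_norm_le
  exact ⟨R, (ae_mem_msupp μ).mono hR⟩

/-! ### The Cauchy–Stieltjes transform at regular points -/

/-- `w` keeps a positive distance from `μ`-almost every real number. This covers `ℂ⁺` and the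
complement of the support in `ℝ`, and is what makes `stT μ` and `Ifun μ` well behaved at `w`. -/
def IsRegularPoint (μ : Measure ℝ) (w : ℂ) : Prop :=
  ∃ d > 0, ∀ᵐ x : ℝ ∂μ, d ≤ ‖(x : ℂ) - w‖

namespace IsRegularPoint

variable {μ : Measure ℝ} {w : ℂ}

theorem of_mem_UHP (μ : Measure ℝ) (hw : w ∈ UHP) : IsRegularPoint μ w := by
  refine ⟨w.im, hw, ae_of_all _ fun x => ?_⟩
  calc w.im ≤ |((x : ℂ) - w).im| := by simpa using le_abs_self w.im
    _ ≤ ‖(x : ℂ) - w‖ := Complex.abs_im_le_norm _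

theorem of_notMem_msupp {E : ℝ} (hE : E ∉ msupp μ) : IsRegularPoint μ E := by
  rw [msupp_eq_support, (nhds_basis_Ioo_pos E).notMem_measureSupport] at hE
  obtain ⟨ε, hε, hμ⟩ := hE
  refine ⟨ε, hε, (measure_eq_zero_iff_ae_notMem.1 hμ).mono fun x hx => ?_⟩
  rw [← Real.ball_eq_Ioo, Metric.mem_ball, not_lt, Real.dist_eq] at hx
  rwa [← Complex.ofReal_sub, Complex.norm_real]

theorem ae_sub_ne_zero (h : IsRegularPoint μ w) : ∀ᵐ x : ℝ ∂μ, (x : ℂ) - w ≠ 0 := by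
  obtain ⟨d, hd, hμ⟩ := h
  exact hμ.mono fun x hx => norm_pos_iff.1 (hd.trans_le hx)

theorem exists_ball (h : IsRegularPoint μ w) :
    ∃ d > 0, ∀ᵐ x : ℝ ∂μ, ∀ v ∈ Metric.ball w d, d ≤ ‖(x : ℂ) - v‖ := by
  obtain ⟨d, hd, hμ⟩ := h
  refine ⟨d / 2, half_pos hd, hμ.mono fun x hx v hv => ?_⟩
  have htri : ‖(x : ℂ) - w‖ ≤ ‖(x : ℂ) - v‖ + ‖v - w‖ := norm_sub_le_norm_sub_add_norm_sub _ _ _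
  rw [Metric.mem_ball, dist_eq_norm] at hv
  linarith

end IsRegularPoint

theorem measurable_inv_ofReal_sub (w : ℂ) : Measurable fun x : ℝ => ((x : ℂ) - w)⁻¹ := by
  fun_prop

theorem normSq_inv_eq_norm_inv_sq (z : ℂ) : (Complex.normSq z)⁻¹ = ‖z⁻¹‖ ^ 2 := by
  rw [norm_inv, inv_pow, Complex.sq_norm]

theorem Ifun_eq_integral_norm_sq (μ : Measure ℝ) (w : ℂ) :
    Ifun μ w = ∫ x, ‖((x : ℂ) - w)⁻¹‖ ^ 2 ∂μ := by
  simp only [Ifun, normSq_inv_eq_norm_inv_sq]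

theorem stT_ofReal (μ : Measure ℝ) (E : ℝ) : stT μ E = stTR μ E := by
  rw [stT, stTR, ← integral_complex_ofReal]
  simp only [Complex.ofReal_inv, Complex.ofReal_sub]

namespace IsRegularPoint

variable {μ : Measure ℝ} [IsFiniteMeasure μ] {w : ℂ}

theorem memLp_inv (h : IsRegularPoint μ w) (p : ENNReal) :
    MemLp (fun x : ℝ => ((x : ℂ) - w)⁻¹) p μ := by
  obtain ⟨d, hd, hμ⟩ := h
  refine MemLp.of_bound (measurable_inv_ofReal_sub w).aestronglyMeasurable d⁻¹ ?_
  filter_upwards [hμ] with x hx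
  rw [norm_inv]
  exact inv_anti₀ hd hx

theorem integrable_inv (h : IsRegularPoint μ w) : Integrable (fun x : ℝ => ((x : ℂ) - w)⁻¹) μ :=
  memLp_one_iff_integrable.1 (h.memLp_inv 1)

theorem integrable_normSq_inv (h : IsRegularPoint μ w) :
    Integrable (fun x : ℝ => (Complex.normSq ((x : ℂ) - w))⁻¹) μ := by
  simp only [normSq_inv_eq_norm_inv_sq]
  exact (h.memLp_inv 2).integrable_norm_pow two_ne_zero

theorem Ifun_pos [NeZero μ] (h : IsRegularPoint μ w) : 0 < Ifun μ w := by
  refine (integral_pos_iff_support_of_nonneg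
    (fun x => inv_nonneg.2 (Complex.normSq_nonneg _)) h.integrable_normSq_inv).2 ?_
  refine pos_of_ne_zero fun h0 => NeZero.ne μ (ae_eq_bot.1 (eventually_false_iff_eq_bot.1 ?_))
  filter_upwards [h.ae_sub_ne_zero, measure_eq_zero_iff_ae_notMem.1 h0] with x hx hx0
  simp [hx] at hx0

theorem stT_im (h : IsRegularPoint μ w) : (stT μ w).im = w.im * Ifun μ w := by
  calc (stT μ w).im = ∫ x : ℝ, (((x : ℂ) - w)⁻¹).im ∂μ :=
        (Complex.imCLM.integral_comp_comm h.integrable_inv).symm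
    _ = ∫ x : ℝ, w.im * (Complex.normSq ((x : ℂ) - w))⁻¹ ∂μ := by
        simp only [Complex.inv_im, Complex.sub_im, Complex.ofReal_im, zero_sub, neg_neg,
          div_eq_mul_inv]
    _ = w.im * Ifun μ w := integral_const_mul _ _

theorem hasDerivAt_stT (h : IsRegularPoint μ w) :
    HasDerivAt (stT μ) (∫ x : ℝ, (((x : ℂ) - w) ^ 2)⁻¹ ∂μ) w := by
  obtain ⟨d, hd, hμ⟩ := h.exists_ball
  refine (hasDerivAt_integral_of_dominated_loc_of_deriv_le
    (F := fun v (x : ℝ) => ((x : ℂ) - v)⁻¹) (F' := fun v (x : ℝ) => (((x : ℂ) - v) ^ 2)⁻¹)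
    (bound := fun _ => (d ^ 2)⁻¹) (Metric.ball_mem_nhds w hd)
    (Eventually.of_forall fun v => (measurable_inv_ofReal_sub v).aestronglyMeasurable)
    h.integrable_inv (by fun_prop) ?_ (integrable_const _) ?_).2
  · filter_upwards [hμ] with x hx v hv
    rw [norm_inv, norm_pow]
    exact inv_anti₀ (by positivity) (pow_le_pow_left₀ hd.le (hx v hv) 2)
  · filter_upwards [hμ] with x hx v hv
    have hne : (x : ℂ) - v ≠ 0 := norm_pos_iff.1 (hd.trans_le (hx v hv))
    simpa using ((hasDerivAt_id v).const_sub (x : ℂ)).fun_inv hne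

theorem continuousAt_Ifun (h : IsRegularPoint μ w) : ContinuousAt (Ifun μ) w := by
  obtain ⟨d, hd, hμ⟩ := h.exists_ball
  refine continuousAt_of_dominated (bound := fun _ => (d ^ 2)⁻¹)
    (Eventually.of_forall fun v => ?_) ?_ (integrable_const _) ?_
  · exact (by fun_prop : Measurable fun x : ℝ =>
      (Complex.normSq ((x : ℂ) - v))⁻¹).aestronglyMeasurable
  · filter_upwards [Metric.ball_mem_nhds w hd] with v hv
    filter_upwards [hμ] with x hx
    rw [norm_inv, Real.norm_of_nonneg (Complex.normSq_nonneg _), ← Complex.sq_norm]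
    exact inv_anti₀ (by positivity) (pow_le_pow_left₀ hd.le (hx v hv) 2)
  · filter_upwards [h.ae_sub_ne_zero] with x hx
    exact ContinuousAt.inv₀ (by fun_prop) (by simpa using hx)

end IsRegularPoint

section UpperHalfPlane

variable {μ : Measure ℝ} [IsFiniteMeasure μ] [NeZero μ] {w : ℂ}

theorem stT_im_pos (hw : w ∈ UHP) : 0 < (stT μ w).im := by
  have h := IsRegularPoint.of_mem_UHP μ hw
  rw [h.stT_im]
  exact mul_pos hw h.Ifun_pos

theorem stT_ne_zero (hw : w ∈ UHP) : stT μ w ≠ 0 := fun h => by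
  simpa [h] using stT_im_pos (μ := μ) hw

theorem nrT_im (μ : Measure ℝ) [IsFiniteMeasure μ] (hw : w ∈ UHP) :
    (nrT μ w).im = w.im * Ifun μ w / Complex.normSq (stT μ w) := by
  rw [nrT, Complex.neg_im, Complex.inv_im, (IsRegularPoint.of_mem_UHP μ hw).stT_im, neg_div,
    neg_neg]

theorem continuousAt_nrT (hw : w ∈ UHP) : ContinuousAt (nrT μ) w :=
  ((IsRegularPoint.of_mem_UHP μ hw).hasDerivAt_stT.continuousAt.inv₀ (stT_ne_zero hw)).neg

end UpperHalfPlane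

/-! ### Strict Cauchy–Schwarz and variances -/

section SquareIntegrable

variable {Ω : Type*} [MeasurableSpace Ω] {μ : Measure Ω}

theorem norm_integral_conj_mul_sq_lt {f g : Ω → ℂ} (hf : MemLp f 2 μ) (hg : MemLp g 2 μ)
    (hg₀ : ¬ g =ᵐ[μ] 0) (hfg : ∀ c : ℂ, ¬ f =ᵐ[μ] c • g) :
    ‖∫ x, conj (g x) * f x ∂μ‖ ^ 2 < (∫ x, ‖f x‖ ^ 2 ∂μ) * ∫ x, ‖g x‖ ^ 2 ∂μ := by
  have inner_toLp {u v : Ω → ℂ} (hu : MemLp u 2 μ) (hv : MemLp v 2 μ) :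
      inner ℂ (hv.toLp v) (hu.toLp u) = ∫ x, conj (v x) * u x ∂μ := by
    rw [L2.inner_def]
    refine integral_congr_ae ?_
    filter_upwards [hu.coeFn_toLp, hv.coeFn_toLp] with x hux hvx
    rw [hux, hvx, RCLike.inner_apply, mul_comm]
  have norm_toLp_sq {u : Ω → ℂ} (hu : MemLp u 2 μ) : ‖hu.toLp u‖ ^ 2 = ∫ x, ‖u x‖ ^ 2 ∂μ := by
    refine Complex.ofReal_injective ?_
    rw [Complex.ofReal_pow, ← integral_complex_ofReal]
    exact (inner_self_eq_norm_sq_to_K (𝕜 := ℂ) (hu.toLp u)).symm.trans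
      ((inner_toLp hu hu).trans (by simp only [Complex.conj_mul', Complex.ofReal_pow]))
  have hg' : hg.toLp g ≠ 0 := fun h => hg₀ ((MemLp.toLp_eq_toLp_iff hg MemLp.zero).1 h)
  have hf' : hf.toLp f ≠ 0 := fun h =>
    hfg 0 (by simpa using (MemLp.toLp_eq_toLp_iff hf MemLp.zero).1 h)
  have hne : ‖inner ℂ (hg.toLp g) (hf.toLp f)‖ ≠ ‖hg.toLp g‖ * ‖hf.toLp f‖ := by
    rw [Ne, norm_inner_eq_norm_iff hg' hf']
    rintro ⟨c, -, hc⟩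
    exact hfg c ((MemLp.toLp_eq_toLp_iff hf (hg.const_smul c)).1 hc)
  rw [← norm_toLp_sq hf, ← norm_toLp_sq hg, ← inner_toLp hf hg, ← mul_pow, mul_comm ‖hf.toLp f‖]
  exact pow_lt_pow_left₀ (lt_of_le_of_ne (norm_inner_le_norm _ _) hne) (norm_nonneg _) two_ne_zero

theorem integral_norm_sub_integral_sq [IsProbabilityMeasure μ] {E : Type*} [NormedAddCommGroup E]
    [InnerProductSpace ℝ E] [CompleteSpace E] {f : Ω → E} (hf : MemLp f 2 μ) :
    ∫ x, ‖f x - ∫ y, f y ∂μ‖ ^ 2 ∂μ = ∫ x, ‖f x‖ ^ 2 ∂μ - ‖∫ x, f x ∂μ‖ ^ 2 := by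
  set m := ∫ x, f x ∂μ
  have hint : Integrable f μ := hf.integrable one_le_two
  have hsq : Integrable (fun x => ‖f x‖ ^ 2) μ := hf.integrable_norm_pow two_ne_zero
  have hlin : Integrable (fun x => 2 * inner ℝ m (f x)) μ := (hint.const_inner m).const_mul 2
  have hsub : Integrable (fun x => ‖f x‖ ^ 2 - 2 * inner ℝ m (f x)) μ := hsq.sub hlin
  have hcross : ∫ x, inner ℝ m (f x) ∂μ = ‖m‖ ^ 2 := by
    rw [integral_inner hint, real_inner_self_eq_norm_sq]
  calc ∫ x, ‖f x - m‖ ^ 2 ∂μ = ∫ x, ‖f x‖ ^ 2 - 2 * inner ℝ m (f x) + ‖m‖ ^ 2 ∂μ := by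
        simp only [norm_sub_sq_real, real_inner_comm]
    _ = ∫ x, ‖f x‖ ^ 2 ∂μ - 2 * ∫ x, inner ℝ m (f x) ∂μ + ‖m‖ ^ 2 := by
        simp only [integral_add hsub (integrable_const _), integral_sub hsq hlin,
          integral_const_mul, integral_const, probReal_univ, one_smul]
    _ = ∫ x, ‖f x‖ ^ 2 ∂μ - ‖m‖ ^ 2 := by rw [hcross]; ring

end SquareIntegrable

/-! ### A strict Julia-type inequality for `F_μ` -/

theorem ae_eval_ofReal_ne_zero (μ : Measure ℝ) [NullSingletonClass μ] {P : Polynomial ℂ}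
    (hP : P ≠ 0) : ∀ᵐ x : ℝ ∂μ, P.eval (x : ℂ) ≠ 0 := by
  have hfin : {x : ℝ | P.IsRoot x}.Finite :=
    (Polynomial.finite_setOfPred_isRoot hP).preimage Complex.ofReal_injective.injOn
  exact measure_eq_zero_iff_ae_notMem.1 (hfin.measure_zero μ)

section ResolventVariance

variable {μ : Measure ℝ} [IsProbabilityMeasure μ] {w : ℂ}

theorem integral_norm_inv_sub_stT_sq (hw : IsRegularPoint μ w) :
    ∫ x : ℝ, ‖((x : ℂ) - w)⁻¹ - stT μ w‖ ^ 2 ∂μ = Ifun μ w - ‖stT μ w‖ ^ 2 := by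
  rw [Ifun_eq_integral_norm_sq]
  exact integral_norm_sub_integral_sq (hw.memLp_inv 2)

theorem integral_sub_mean_mul_inv_sub_stT (hμ : Integrable id μ) (hw : IsRegularPoint μ w) :
    ∫ x : ℝ, ((x : ℂ) - (∫ y, y ∂μ : ℝ)) * (((x : ℂ) - w)⁻¹ - stT μ w) ∂μ =
      1 + (w - (∫ y, y ∂μ : ℝ)) * stT μ w := by
  set a : ℂ := ((∫ y, y ∂μ : ℝ) : ℂ)
  set m := stT μ w
  have hA : Integrable (fun x : ℝ => (w - a) * ((x : ℂ) - w)⁻¹) μ := hw.integrable_inv.const_mul _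
  have hx : Integrable (fun x : ℝ => m * (x : ℂ)) μ := hμ.ofReal.const_mul m
  have hAx : Integrable (fun x : ℝ => (w - a) * ((x : ℂ) - w)⁻¹ - m * x) μ := hA.sub hx
  have hmean : ∫ x : ℝ, (x : ℂ) ∂μ = a := integral_complex_ofReal
  calc ∫ x : ℝ, ((x : ℂ) - a) * (((x : ℂ) - w)⁻¹ - m) ∂μ
      = ∫ x : ℝ, (w - a) * ((x : ℂ) - w)⁻¹ - m * x + (1 + a * m) ∂μ := by
        refine integral_congr_ae (hw.ae_sub_ne_zero.mono fun x hxw => ?_)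
        field_simp
        ring
    _ = (w - a) * m - m * a + (1 + a * m) := by
        simp only [integral_add hAx (integrable_const _), integral_sub hA hx, integral_const_mul,
          integral_const, probReal_univ, one_smul, hmean]
        rfl
    _ = 1 + (w - a) * m := by ring

variable [NullSingletonClass μ]

theorem norm_one_add_mul_stT_sq_lt (hμ : MemLp id 2 μ) (hw : IsRegularPoint μ w) :
    ‖1 + (w - (∫ x, x ∂μ : ℝ)) * stT μ w‖ ^ 2 < (Ifun μ w - ‖stT μ w‖ ^ 2) * Var[id; μ] := by
  set a : ℝ := ∫ x, x ∂μ with ha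
  set m := stT μ w
  have hf : MemLp (fun x : ℝ => ((x : ℂ) - w)⁻¹ - m) 2 μ := (hw.memLp_inv 2).sub (memLp_const m)
  have hg : MemLp (fun x : ℝ => (x : ℂ) - (a : ℂ)) 2 μ :=
    (hμ.ofReal (K := ℂ)).sub (memLp_const (a : ℂ))
  have hg₀ : ¬ (fun x : ℝ => (x : ℂ) - (a : ℂ)) =ᵐ[μ] 0 := fun h0 => by
    have hroot := ae_eval_ofReal_ne_zero μ (Polynomial.X_sub_C_ne_zero (a : ℂ))
    obtain ⟨x, hx₀, hx⟩ := (h0.and hroot).exists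
    exact hx (by simpa using hx₀)
  -- a.e. proportionality makes every `x` a root of `(X - w) (m + c (X - a)) - 1`
  have hfg : ∀ c : ℂ, ¬ (fun x : ℝ => ((x : ℂ) - w)⁻¹ - m) =ᵐ[μ]
      c • fun x : ℝ => (x : ℂ) - (a : ℂ) := fun c hc => by
    let P : Polynomial ℂ := (.X - .C w) * (.C m + .C c * (.X - .C (a : ℂ))) - 1
    have hP : P ≠ 0 := fun h => by simpa [P] using congrArg (Polynomial.eval w) h
    obtain ⟨x, ⟨hxc, hxP⟩, hxw⟩ :=
      ((hc.and (ae_eval_ofReal_ne_zero μ hP)).and hw.ae_sub_ne_zero).exists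
    refine hxP ?_
    have hx : ((x : ℂ) - w)⁻¹ = m + c * (x - a) := by
      simpa [sub_eq_iff_eq_add'] using hxc
    simp [P, ← hx, hxw]
  have hlt := norm_integral_conj_mul_sq_lt hf hg hg₀ hfg
  have hvar : ∫ x : ℝ, ‖(x : ℂ) - (a : ℂ)‖ ^ 2 ∂μ = Var[id; μ] := by
    rw [variance_eq_integral measurable_id.aemeasurable]
    simp only [← Complex.ofReal_sub, Complex.norm_real, Real.norm_eq_abs, sq_abs, id, ha]
  have hconj : ∫ x : ℝ, conj ((x : ℂ) - (a : ℂ)) * (((x : ℂ) - w)⁻¹ - m) ∂μ = 1 + (w - a) * m := by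
    simp only [map_sub, Complex.conj_ofReal]
    exact integral_sub_mean_mul_inv_sub_stT (hμ.integrable one_le_two) hw
  rwa [hconj, hvar, integral_norm_inv_sub_stT_sq hw] at hlt

theorem norm_nrT_sub_add_mean_sq_mul_im_lt (hμ : MemLp id 2 μ) (hw : w ∈ UHP) :
    ‖nrT μ w - w + (∫ x, x ∂μ : ℝ)‖ ^ 2 * w.im < (nrT μ w - w).im * Var[id; μ] := by
  set a : ℂ := ((∫ x, x ∂μ : ℝ) : ℂ)
  have hm : stT μ w ≠ 0 := stT_ne_zero hw
  have hm' : 0 < ‖stT μ w‖ ^ 2 := by positivity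
  have hF : nrT μ w - w + a = -(1 + (w - a) * stT μ w) / stT μ w := by
    rw [nrT]
    field_simp
    ring
  have him : (nrT μ w - w).im = w.im * (Ifun μ w - ‖stT μ w‖ ^ 2) / ‖stT μ w‖ ^ 2 := by
    rw [Complex.sub_im, nrT_im μ hw, ← Complex.sq_norm]
    field_simp
  have key := norm_one_add_mul_stT_sq_lt hμ (IsRegularPoint.of_mem_UHP μ hw)
  rw [hF, him, norm_div, norm_neg, div_pow, div_mul_eq_mul_div, div_mul_eq_mul_div,
    div_lt_div_iff_of_pos_right hm', mul_assoc, mul_comm]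
  exact mul_lt_mul_of_pos_left key hw

end ResolventVariance

/-! ### Behaviour at infinity -/

section AtInfinity

variable {μ : Measure ℝ} {R : ℝ}

theorem half_norm_le_norm_sub {x : ℝ} (hx : |x| ≤ R) {w : ℂ} (hw : 2 * R ≤ ‖w‖) :
    ‖w‖ / 2 ≤ ‖(x : ℂ) - w‖ := by
  have htri : ‖w‖ - ‖(x : ℂ)‖ ≤ ‖(x : ℂ) - w‖ := norm_sub_rev w x ▸ norm_sub_norm_le w x
  rw [Complex.norm_real, Real.norm_eq_abs] at htri
  linarith

theorem eventually_isRegularPoint_cobounded (hR : ∀ᵐ x ∂μ, |x| ≤ R) :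
    ∀ᶠ w in Bornology.cobounded ℂ, IsRegularPoint μ w := by
  filter_upwards [tendsto_norm_cobounded_atTop.eventually_ge_atTop (2 * R),
    tendsto_norm_cobounded_atTop.eventually_gt_atTop 0] with w hw hw₀
  exact ⟨‖w‖ / 2, half_pos hw₀, hR.mono fun x hx => half_norm_le_norm_sub hx hw⟩

theorem tendsto_mul_inv_ofReal_sub_cobounded (x : ℝ) :
    Tendsto (fun w : ℂ => w * ((x : ℂ) - w)⁻¹) (Bornology.cobounded ℂ) (𝓝 (-1)) := by
  have hinv : Tendsto (fun w : ℂ => (x : ℂ) * w⁻¹ - 1) (Bornology.cobounded ℂ) (𝓝 (-1)) := by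
    simpa using (tendsto_inv₀_cobounded.const_mul (x : ℂ)).sub_const 1
  have hlim := hinv.inv₀ (neg_ne_zero.2 one_ne_zero)
  rw [inv_neg, inv_one] at hlim
  refine hlim.congr' ?_
  filter_upwards [tendsto_norm_cobounded_atTop.eventually_gt_atTop 0] with w hw
  have hw₀ : w ≠ 0 := norm_pos_iff.1 hw
  rw [show (x : ℂ) * w⁻¹ - 1 = w⁻¹ * (x - w) by field_simp, mul_inv, inv_inv]

theorem tendsto_integral_comp_mul_inv_cobounded [IsFiniteMeasure μ] {F : Type*}
    [NormedAddCommGroup F] [NormedSpace ℝ F] {Φ : ℝ → ℂ → F}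
    (hΦ : Continuous fun p : ℝ × ℂ => Φ p.1 p.2) (hR : ∀ᵐ x ∂μ, |x| ≤ R) :
    Tendsto (fun w : ℂ => ∫ x, Φ x (w * ((x : ℂ) - w)⁻¹) ∂μ) (Bornology.cobounded ℂ)
      (𝓝 (∫ x, Φ x (-1) ∂μ)) := by
  have hK : IsCompact (Icc (-R) R ×ˢ Metric.closedBall (0 : ℂ) 2) :=
    isCompact_Icc.prod (isCompact_closedBall 0 2)
  obtain ⟨C, hC⟩ := hK.exists_bound_of_continuousOn hΦ.continuousOn
  have : (Bornology.cobounded ℂ).IsCountablyGenerated := by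
    rw [← comap_norm_atTop]
    infer_instance
  refine tendsto_integral_filter_of_dominated_convergence (fun _ => C) ?_ ?_
    (integrable_const C) ?_
  · refine Eventually.of_forall fun w => ?_
    exact (hΦ.stronglyMeasurable.comp_measurable (measurable_id.prodMk
      ((measurable_inv_ofReal_sub w).const_mul w))).aestronglyMeasurable
  · filter_upwards [tendsto_norm_cobounded_atTop.eventually_ge_atTop (2 * R),
      tendsto_norm_cobounded_atTop.eventually_gt_atTop 0] with w hw hw₀
    filter_upwards [hR] with x hx
    refine hC (x, _) ⟨abs_le.1 hx, ?_⟩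
    have hle := half_norm_le_norm_sub hx hw
    rw [mem_closedBall_zero_iff, norm_mul, norm_inv, ← div_eq_mul_inv,
      div_le_iff₀ ((half_pos hw₀).trans_le hle)]
    linarith
  · refine ae_of_all _ fun x => ?_
    exact (hΦ.tendsto (x, -1)).comp
      (tendsto_const_nhds.prodMk_nhds (tendsto_mul_inv_ofReal_sub_cobounded x))

variable [IsProbabilityMeasure μ]

theorem tendsto_mul_stT_cobounded (hR : ∀ᵐ x ∂μ, |x| ≤ R) :
    Tendsto (fun w => w * stT μ w) (Bornology.cobounded ℂ) (𝓝 (-1)) := by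
  simpa [integral_const_mul, stT] using
    tendsto_integral_comp_mul_inv_cobounded (Φ := fun _ u => u) continuous_snd hR

theorem tendsto_norm_sq_mul_Ifun_cobounded (hR : ∀ᵐ x ∂μ, |x| ≤ R) :
    Tendsto (fun w => ‖w‖ ^ 2 * Ifun μ w) (Bornology.cobounded ℂ) (𝓝 1) := by
  have h := tendsto_integral_comp_mul_inv_cobounded (Φ := fun _ u => ‖u‖ ^ 2) (by fun_prop) hR
  simpa only [norm_mul, mul_pow, integral_const_mul, ← Ifun_eq_integral_norm_sq, norm_neg,
    norm_one, one_pow, integral_const, probReal_univ, one_smul] using h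

theorem norm_pow_four_mul_Ifun_sub {w : ℂ} (hw : IsRegularPoint μ w) :
    ‖w‖ ^ 4 * (Ifun μ w - ‖stT μ w‖ ^ 2) =
      ∫ x : ℝ, ‖x * (w * ((x : ℂ) - w)⁻¹)‖ ^ 2 ∂μ -
        ‖∫ x : ℝ, x * (w * ((x : ℂ) - w)⁻¹) ∂μ‖ ^ 2 := by
  have hB : (fun x : ℝ => (x : ℂ) * (w * ((x : ℂ) - w)⁻¹)) =ᵐ[μ]
      fun x => w ^ 2 * ((x : ℂ) - w)⁻¹ + w := by
    filter_upwards [hw.ae_sub_ne_zero] with x hx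
    field_simp
    ring
  have hmean : ∫ x : ℝ, w ^ 2 * ((x : ℂ) - w)⁻¹ + w ∂μ = w ^ 2 * stT μ w + w := by
    rw [integral_add (hw.integrable_inv.const_mul _) (integrable_const w), integral_const_mul,
      integral_const, probReal_univ, one_smul, stT]
  have hmem : MemLp (fun x : ℝ => w ^ 2 * ((x : ℂ) - w)⁻¹ + w) 2 μ :=
    ((hw.memLp_inv 2).const_mul _).add (memLp_const w)
  have hBsq : (fun x : ℝ => ‖(x : ℂ) * (w * ((x : ℂ) - w)⁻¹)‖ ^ 2) =ᵐ[μ]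
      fun x => ‖w ^ 2 * ((x : ℂ) - w)⁻¹ + w‖ ^ 2 := hB.fun_comp fun u => ‖u‖ ^ 2
  rw [integral_congr_ae hB, integral_congr_ae hBsq]
  refine Eq.trans ?_ (integral_norm_sub_integral_sq hmem)
  rw [hmean, ← integral_norm_inv_sub_stT_sq hw, ← integral_const_mul]
  simp only [add_sub_add_right_eq_sub, ← mul_sub, norm_mul, norm_pow, mul_pow, ← pow_mul]

theorem tendsto_norm_pow_four_mul_Ifun_sub_cobounded (hR : ∀ᵐ x ∂μ, |x| ≤ R) :
    Tendsto (fun w => ‖w‖ ^ 4 * (Ifun μ w - ‖stT μ w‖ ^ 2)) (Bornology.cobounded ℂ)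
      (𝓝 Var[id; μ]) := by
  have hid : MemLp id 2 μ := MemLp.of_bound aestronglyMeasurable_id R hR
  have hsq := tendsto_integral_comp_mul_inv_cobounded (Φ := fun x u => ‖(x : ℂ) * u‖ ^ 2)
    (by fun_prop) hR
  have hmean := tendsto_integral_comp_mul_inv_cobounded (Φ := fun x u => (x : ℂ) * u)
    (by fun_prop) hR
  have hlim : ∫ x : ℝ, ‖(x : ℂ) * -1‖ ^ 2 ∂μ - ‖∫ x : ℝ, (x : ℂ) * -1 ∂μ‖ ^ 2 = Var[id; μ] := by
    rw [variance_eq_sub hid, integral_mul_const, integral_complex_ofReal]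
    simp
  rw [← hlim]
  refine (hsq.sub (hmean.norm.pow 2)).congr' ?_
  filter_upwards [eventually_isRegularPoint_cobounded hR] with w hw
  exact (norm_pow_four_mul_Ifun_sub hw).symm

theorem tendsto_inv_norm_stT_sq_sub_inv_Ifun_cobounded (hR : ∀ᵐ x ∂μ, |x| ≤ R) :
    Tendsto (fun w => (‖stT μ w‖ ^ 2)⁻¹ - (Ifun μ w)⁻¹) (Bornology.cobounded ℂ)
      (𝓝 Var[id; μ]) := by
  have hm := (tendsto_mul_stT_cobounded hR).norm.pow 2
  have hI := tendsto_norm_sq_mul_Ifun_cobounded hR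
  rw [norm_neg, norm_one, one_pow] at hm
  have hlim := (tendsto_norm_pow_four_mul_Ifun_sub_cobounded hR).div (hm.mul hI) (by norm_num)
  rw [mul_one, div_one] at hlim
  refine hlim.congr' ?_
  filter_upwards [hm.eventually_ne one_ne_zero, hI.eventually_ne one_ne_zero] with w hmw hIw
  have hm₀ : ‖stT μ w‖ ≠ 0 := fun h => hmw (by simp [h])
  have hI₀ : Ifun μ w ≠ 0 := right_ne_zero_of_mul hIw
  have hw₀ : ‖w‖ ≠ 0 := fun h => hIw (by simp [h])
  rw [Pi.div_apply, norm_mul]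
  field_simp

end AtInfinity

/-! ### A criterion for leaving the support -/

theorem measureReal_Ioc_le_mul_Ifun (μ : Measure ℝ) [IsFiniteMeasure μ] {x y : ℝ} (hxy : x < y) :
    μ.real (Ioc x y) ≤ 2 * (y - x) ^ 2 * Ifun μ (x + (y - x : ℝ) * Complex.I) := by
  set w : ℂ := x + (y - x : ℝ) * Complex.I
  have hw : w ∈ UHP := by simpa [w, UHP] using hxy
  have hint := (IsRegularPoint.of_mem_UHP μ hw).integrable_normSq_inv
  have hle : (2 * (y - x) ^ 2)⁻¹ * μ.real (Ioc x y) ≤ Ifun μ w :=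
    calc (2 * (y - x) ^ 2)⁻¹ * μ.real (Ioc x y)
        ≤ ∫ t in Ioc x y, (Complex.normSq ((t : ℂ) - w))⁻¹ ∂μ := by
          refine setIntegral_ge_of_const_le_real measurableSet_Ioc (measure_ne_top _ _)
            (fun t ht => ?_) hint.integrableOn
          have hsq : Complex.normSq ((t : ℂ) - w) = (t - x) ^ 2 + (y - x) ^ 2 := by
            simp [Complex.normSq_apply, w]
            ring
          rw [hsq]
          have : (t - x) ^ 2 ≤ (y - x) ^ 2 :=
            pow_le_pow_left₀ (sub_nonneg.2 ht.1.le) (sub_le_sub_right ht.2 x) 2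
          exact inv_anti₀ (by nlinarith [sub_pos.2 hxy]) (by linarith)
      _ ≤ Ifun μ w := setIntegral_le_integral hint
          (ae_of_all _ fun t => inv_nonneg.2 (Complex.normSq_nonneg _))
  rwa [inv_mul_le_iff₀ (mul_pos two_pos (pow_pos (sub_pos.2 hxy) 2))] at hle

theorem eq_of_abs_sub_le_mul_sq {g : ℝ → ℝ} {s : Set ℝ} {C : ℝ} (hs : IsOpen s)
    (hs' : IsPreconnected s) (h : ∀ x ∈ s, ∀ y ∈ s, |g y - g x| ≤ C * (y - x) ^ 2)
    {x y : ℝ} (hx : x ∈ s) (hy : y ∈ s) : g x = g y := by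
  have hderiv : ∀ z ∈ s, HasDerivAt g 0 z := fun z hz => by
    rw [hasDerivAt_iff_isLittleO]
    refine Asymptotics.IsBigO.trans_isLittleO (g := fun t => ‖t - z‖ ^ 2) ?_
      (Asymptotics.isLittleO_pow_sub_sub z one_lt_two)
    refine Asymptotics.IsBigO.of_bound C ?_
    filter_upwards [hs.mem_nhds hz] with t ht
    simpa using h z hz t ht
  exact hs.is_const_of_deriv_eq_zero hs'
    (fun z hz => (hderiv z hz).differentiableAt.differentiableWithinAt)
    (fun z hz => (hderiv z hz).deriv) hx hy

theorem measureReal_Ioc_le_of_Ifun_le {μ : Measure ℝ} [IsFiniteMeasure μ] {E C δ : ℝ}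
    (h : ∀ w ∈ Metric.ball (E : ℂ) δ ∩ UHP, Ifun μ w ≤ C) {x y : ℝ} (hx : E - δ / 3 < x)
    (hxy : x < y) (hy : y < E + δ / 3) : μ.real (Ioc x y) ≤ 2 * C * (y - x) ^ 2 := by
  have hmem : (x + (y - x : ℝ) * Complex.I : ℂ) ∈ Metric.ball (E : ℂ) δ ∩ UHP := by
    refine ⟨?_, by simpa [UHP] using hxy⟩
    rw [Metric.mem_ball, dist_eq_norm]
    calc ‖x + (y - x : ℝ) * Complex.I - (E : ℂ)‖
        = ‖((x - E : ℝ) : ℂ) + (y - x : ℝ) * Complex.I‖ := by push_cast; ring_nf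
      _ ≤ |x - E| + |y - x| := by
        refine (norm_add_le _ _).trans_eq ?_
        rw [norm_mul, Complex.norm_I, mul_one, Complex.norm_real, Complex.norm_real,
          Real.norm_eq_abs, Real.norm_eq_abs]
      _ < δ := by
        have hxE : |x - E| < δ / 3 := abs_lt.2 ⟨by linarith, by linarith⟩
        rw [abs_of_pos (sub_pos.2 hxy)]
        linarith
  calc μ.real (Ioc x y) ≤ 2 * (y - x) ^ 2 * Ifun μ (x + (y - x : ℝ) * Complex.I) :=
        measureReal_Ioc_le_mul_Ifun μ hxy
    _ ≤ 2 * (y - x) ^ 2 * C := mul_le_mul_of_nonneg_left (h _ hmem) (by positivity)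
    _ = 2 * C * (y - x) ^ 2 := by ring

theorem measureReal_Ioc_eq_sub (μ : Measure ℝ) [IsFiniteMeasure μ] {x y : ℝ} (hxy : x ≤ y) :
    μ.real (Ioc x y) = μ.real (Iic y) - μ.real (Iic x) := by
  rw [← Iic_union_Ioc_eq_Iic hxy, measureReal_union (Iic_disjoint_Ioc le_rfl) measurableSet_Ioc,
    add_sub_cancel_left]

theorem notMem_msupp_of_Ifun_le {μ : Measure ℝ} [IsFiniteMeasure μ] {E C : ℝ}
    (h : ∀ᶠ w in 𝓝[UHP] (E : ℂ), Ifun μ w ≤ C) : E ∉ msupp μ := by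
  obtain ⟨δ, hδ, hball⟩ := Metric.mem_nhdsWithin_iff.1 h
  have hsq : ∀ x ∈ Ioo (E - δ / 3) (E + δ / 3), ∀ y ∈ Ioo (E - δ / 3) (E + δ / 3),
      |μ.real (Iic y) - μ.real (Iic x)| ≤ 2 * C * (y - x) ^ 2 := fun x hx y hy => by
    rcases lt_trichotomy x y with hxy | rfl | hxy
    · rw [← measureReal_Ioc_eq_sub μ hxy.le, abs_of_nonneg measureReal_nonneg]
      exact measureReal_Ioc_le_of_Ifun_le hball hx.1 hxy hy.2
    · simp
    · rw [abs_sub_comm, ← measureReal_Ioc_eq_sub μ hxy.le, abs_of_nonneg measureReal_nonneg,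
        ← neg_sub, neg_sq]
      exact measureReal_Ioc_le_of_Ifun_le hball hy.1 hxy hx.2
  have hconst : μ.real (Iic (E - δ / 4)) = μ.real (Iic (E + δ / 4)) :=
    eq_of_abs_sub_le_mul_sq isOpen_Ioo isPreconnected_Ioo hsq
      ⟨by linarith, by linarith⟩ ⟨by linarith, by linarith⟩
  have hzero : μ.real (Ioc (E - δ / 4) (E + δ / 4)) = 0 := by
    rw [measureReal_Ioc_eq_sub μ (by linarith), hconst, sub_self]
  intro hE
  exact (hE (δ / 4) (by linarith)).ne'
    (measure_mono_null Ioo_subset_Ioc_self ((measureReal_eq_zero_iff).1 hzero))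

/-! ### The Nevanlinna measure at a zero of the Cauchy–Stieltjes transform -/

section NevanlinnaMeasure

theorem tendsto_mul_stT_add_mul_I (ν : Measure ℝ) [IsFiniteMeasure ν] (E : ℝ) :
    Tendsto (fun η : ℝ => (η * Complex.I) * stT ν (E + η * Complex.I)) (𝓝[>] 0)
      (𝓝 (-(ν.real {E} : ℂ))) := by
  have hlim : ∫ x, ({E} : Set ℝ).indicator (fun _ => (-1 : ℂ)) x ∂ν = -(ν.real {E} : ℂ) := by
    rw [integral_indicator_const _ (measurableSet_singleton E)]
    simp
  rw [← hlim]
  simp only [stT, ← integral_const_mul]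
  refine tendsto_integral_filter_of_dominated_convergence (fun _ => 1) ?_ ?_
    (integrable_const 1) (ae_of_all _ fun x => ?_)
  · exact Eventually.of_forall fun η =>
      ((measurable_inv_ofReal_sub _).const_mul _).aestronglyMeasurable
  · refine Eventually.of_forall fun η => ae_of_all _ fun x => ?_
    rw [norm_mul, norm_inv, ← div_eq_mul_inv]
    refine div_le_one_of_le₀ ?_ (norm_nonneg _)
    simpa using Complex.abs_im_le_norm ((x : ℂ) - (E + η * Complex.I))
  · rcases eq_or_ne x E with rfl | hx
    · refine tendsto_const_nhds.congr' ?_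
      filter_upwards [self_mem_nhdsWithin] with η (hη : 0 < η)
      have hη₀ : (η : ℂ) ≠ 0 := Complex.ofReal_ne_zero.2 hη.ne'
      rw [indicator_of_mem (mem_singleton x), sub_add_cancel_left, inv_neg, mul_neg,
        mul_inv_cancel₀ (mul_ne_zero hη₀ Complex.I_ne_zero)]
    · rw [indicator_of_notMem (notMem_singleton_iff.2 hx)]
      have hx₀ : (x : ℂ) - (E + (0 : ℝ) * Complex.I) ≠ 0 := by simpa [sub_eq_zero] using hx
      have hcont : ContinuousAt (fun η : ℝ =>
          (η * Complex.I) * ((x : ℂ) - (E + η * Complex.I))⁻¹) 0 :=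
        ContinuousAt.mul (by fun_prop) (ContinuousAt.inv₀ (by fun_prop) hx₀)
      simpa using hcont.tendsto.mono_left nhdsWithin_le_nhds

variable {μ ν : Measure ℝ} {E : ℝ}

theorem integral_sq_inv_eq_Ifun (μ : Measure ℝ) (E : ℝ) :
    ∫ x : ℝ, (((x : ℂ) - E) ^ 2)⁻¹ ∂μ = Ifun μ E := by
  rw [Ifun, ← integral_complex_ofReal]
  refine integral_congr_ae (ae_of_all _ fun x => ?_)
  simp only [← Complex.ofReal_sub, Complex.normSq_ofReal, ← sq, Complex.ofReal_inv,
    Complex.ofReal_pow]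

theorem tendsto_sub_mul_nrT [IsFiniteMeasure μ] [NeZero μ] (hE : IsRegularPoint μ E)
    (hE₀ : stT μ E = 0) : Tendsto (fun z => (z - E) * nrT μ z) (𝓝[≠] (E : ℂ))
      (𝓝 (-(Ifun μ E : ℂ)⁻¹)) := by
  have hI : (Ifun μ E : ℂ) ≠ 0 := Complex.ofReal_ne_zero.2 hE.Ifun_pos.ne'
  have hslope := hasDerivAt_iff_tendsto_slope.1 hE.hasDerivAt_stT
  rw [integral_sq_inv_eq_Ifun] at hslope
  refine (hslope.inv₀ hI).neg.congr fun z => ?_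
  rw [slope_def_field, hE₀, sub_zero, inv_div, nrT, mul_neg, div_eq_mul_inv]

namespace IsNevanHat

theorem measureReal_singleton [IsFiniteMeasure μ] [NeZero μ] (hν : IsNevanHat μ ν)
    (hE : IsRegularPoint μ E) (hE₀ : stT μ E = 0) : ν.real {E} = (Ifun μ E)⁻¹ := by
  have := hν.1
  have hpath : Tendsto (fun η : ℝ => (E : ℂ) + η * Complex.I) (𝓝[>] 0) (𝓝[≠] (E : ℂ)) :=
    (tendsto_add_mul_I E).mono_right (nhdsWithin_mono _ fun z (hz : 0 < z.im) h => by
      simp [mem_singleton_iff.1 h] at hz)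
  have hη : Tendsto (fun η : ℝ => (η : ℂ) * Complex.I) (𝓝[>] 0) (𝓝 0) := by
    simpa using (tendsto_nhdsWithin_iff.1 (tendsto_add_mul_I 0)).1
  have hz : Tendsto (fun η : ℝ => (E : ℂ) + η * Complex.I) (𝓝[>] 0) (𝓝 E) :=
    hpath.mono_right nhdsWithin_le_nhds
  have hF := ((tendsto_sub_mul_nrT hE hE₀).comp hpath).sub
    (hη.mul (hz.sub_const ((∫ x, x ∂μ : ℝ) : ℂ)))
  rw [zero_mul, sub_zero] at hF
  have hlim := tendsto_nhds_unique_of_eventuallyEq (tendsto_mul_stT_add_mul_I ν E) hF <| by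
    filter_upwards [(tendsto_nhdsWithin_iff.1 (tendsto_add_mul_I E)).2] with η hη
    have hrep := hν.2 _ hη
    simp only [Function.comp_apply, add_sub_cancel_left, stT]
    linear_combination (-(η : ℂ) * Complex.I) * hrep
  exact_mod_cast neg_injective hlim

theorem measureReal_singleton_mul_im_le (hν : IsNevanHat μ ν) (E : ℝ) {w : ℂ} (hw : w ∈ UHP) :
    ν.real {E} * w.im ≤ (nrT μ w - w).im * ‖w - E‖ ^ 2 := by
  have := hν.1
  have hreg := IsRegularPoint.of_mem_UHP ν hw
  have hatom : ν.real {E} * (Complex.normSq ((E : ℂ) - w))⁻¹ ≤ Ifun ν w :=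
    calc ν.real {E} * (Complex.normSq ((E : ℂ) - w))⁻¹
        = ∫ x in {E}, (Complex.normSq ((x : ℂ) - w))⁻¹ ∂ν :=
          (integral_singleton (fun x : ℝ => (Complex.normSq ((x : ℂ) - w))⁻¹) E).symm
      _ ≤ Ifun ν w := setIntegral_le_integral hreg.integrable_normSq_inv
          (ae_of_all _ fun x => inv_nonneg.2 (Complex.normSq_nonneg _))
  have him : (nrT μ w - w).im = w.im * Ifun ν w := by
    rw [hν.2 w hw, ← hreg.stT_im, Complex.add_im, Complex.neg_im, Complex.ofReal_im, neg_zero,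
      zero_add, stT]
  have hpos : 0 < ‖w - E‖ ^ 2 := by
    rw [Complex.sq_norm, Complex.normSq_apply, Complex.sub_im, Complex.ofReal_im, sub_zero]
    exact add_pos_of_nonneg_of_pos (mul_self_nonneg _) (mul_pos hw hw)
  rw [← Complex.sq_norm, norm_sub_rev, ← div_eq_mul_inv, div_le_iff₀ hpos] at hatom
  rw [him, mul_comm, mul_assoc]
  exact mul_le_mul_of_nonneg_left hatom (le_of_lt hw)

end IsNevanHat

end NevanlinnaMeasure

/-! ### Subordination near a zero of `m_{μ_α}` -/

namespace IsSubordPair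

variable {μa μb μab : Measure ℝ} {ωa ωb : ℂ → ℂ}

theorem stT_eq (h : IsSubordPair μa μb ωa ωb) {z : ℂ} (hz : z ∈ UHP) :
    stT μa (ωb z) = stT μb (ωa z) := by
  have heq : nrT μa (ωb z) = nrT μb (ωa z) := (h.eqn_a z hz).symm.trans (h.eqn_b z hz)
  exact inv_injective (neg_injective heq)

theorem tendsto_fst_cobounded [IsFiniteMeasure μa] [NeZero μa] (h : IsSubordPair μa μb ωa ωb)
    {z₀ E : ℂ} (hE : IsRegularPoint μa E) (hE₀ : stT μa E = 0)
    (hωb : Tendsto ωb (𝓝[UHP] z₀) (𝓝 E)) :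
    Tendsto ωa (𝓝[UHP] z₀) (Bornology.cobounded ℂ) := by
  have hUHP : ∀ᶠ z in 𝓝[UHP] z₀, z ∈ UHP := self_mem_nhdsWithin
  have hm : Tendsto (fun z => stT μa (ωb z)) (𝓝[UHP] z₀) (𝓝[≠] 0) := by
    refine tendsto_nhdsWithin_iff.2 ⟨hE₀ ▸ hE.hasDerivAt_stT.continuousAt.tendsto.comp hωb, ?_⟩
    exact hUHP.mono fun z hz => stT_ne_zero (h.maps_b z hz)
  have hF : Tendsto (fun z => ‖nrT μa (ωb z)‖) (𝓝[UHP] z₀) atTop := by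
    simp only [nrT, norm_neg]
    exact tendsto_norm_cobounded_atTop.comp (tendsto_inv₀_nhdsNE_zero.comp hm)
  have hshift : Tendsto (fun z => ωb z - z) (𝓝[UHP] z₀) (𝓝 (E - z₀)) :=
    hωb.sub (tendsto_id.mono_left nhdsWithin_le_nhds)
  rw [← tendsto_norm_atTop_iff_cobounded]
  refine tendsto_atTop_mono' _ ?_ (hF.atTop_add hshift.norm.neg)
  filter_upwards [hUHP] with z hz
  rw [show ωa z = nrT μa (ωb z) - (ωb z - z) by rw [← h.eqn_a z hz]; ring, ← sub_eq_add_neg]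
  exact norm_sub_norm_le _ _

theorem nrT_eq_nrT_of_tendsto [IsFiniteMeasure μa] [NeZero μa] [IsFiniteMeasure μb] [NeZero μb]
    (h : IsSubordPair μa μb ωa ωb) {z₀ b : ℂ} (hz₀ : z₀ ∈ CUHP) (hb : b ∈ UHP)
    (ha : nrT μa b - b + z₀ ∈ UHP) (hωb : Tendsto ωb (𝓝[UHP] z₀) (𝓝 b)) :
    nrT μa b = nrT μb (nrT μa b - b + z₀) := by
  have := nhdsWithin_UHP_neBot hz₀
  have hUHP : ∀ᶠ z in 𝓝[UHP] z₀, z ∈ UHP := self_mem_nhdsWithin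
  have hz : Tendsto id (𝓝[UHP] z₀) (𝓝 z₀) := nhdsWithin_le_nhds
  have hFa : Tendsto (fun z => nrT μa (ωb z)) (𝓝[UHP] z₀) (𝓝 (nrT μa b)) :=
    (continuousAt_nrT hb).tendsto.comp hωb
  have hωa : Tendsto ωa (𝓝[UHP] z₀) (𝓝 (nrT μa b - b + z₀)) := by
    refine ((hFa.sub hωb).add hz).congr' (hUHP.mono fun z hz => ?_)
    rw [← h.eqn_a z hz, id]
    ring
  exact tendsto_nhds_unique_of_eventuallyEq hFa ((continuousAt_nrT ha).tendsto.comp hωa)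
    (hUHP.mono fun z hz => (h.eqn_a z hz).symm.trans (h.eqn_b z hz))

variable [IsProbabilityMeasure μa] [IsProbabilityMeasure μb]

theorem inv_Ifun_freeConv (h : IsSubordPair μa μb ωa ωb) (hconv : IsFreeConv μa μb ωb μab)
    {z : ℂ} (hz : z ∈ UHP) :
    (Ifun μab z)⁻¹ = (Ifun μa (ωb z))⁻¹ -
      ((‖stT μb (ωa z)‖ ^ 2)⁻¹ - (Ifun μb (ωa z))⁻¹) := by
  have := hconv.1
  have ha := h.maps_a z hz
  have hb := h.maps_b z hz
  have hab := hconv.2 z hz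
  set m := stT μb (ωa z)
  have hm : stT μa (ωb z) = m := h.stT_eq hz
  have hm₀ : m.im ≠ 0 := (stT_im_pos ha).ne'
  have hIa : m.im = (ωb z).im * Ifun μa (ωb z) :=
    hm ▸ (IsRegularPoint.of_mem_UHP μa hb).stT_im
  have hIb : m.im = (ωa z).im * Ifun μb (ωa z) := (IsRegularPoint.of_mem_UHP μb ha).stT_im
  have hIab : m.im = z.im * Ifun μab z :=
    (hab.trans hm) ▸ (IsRegularPoint.of_mem_UHP μab hz).stT_im
  have hIa₀ := (IsRegularPoint.of_mem_UHP μa hb).Ifun_pos.ne'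
  have hIb₀ := (IsRegularPoint.of_mem_UHP μb ha).Ifun_pos.ne'
  have hIab₀ := (IsRegularPoint.of_mem_UHP μab hz).Ifun_pos.ne'
  have him : (ωa z).im + (ωb z).im - z.im = m.im / ‖m‖ ^ 2 := by
    rw [← Complex.add_im, ← Complex.sub_im, h.eqn_b z hz, nrT_im μb ha, ← hIb, Complex.sq_norm]
  rw [← div_eq_iff hIa₀] at hIa
  rw [← div_eq_iff hIb₀] at hIb
  rw [← div_eq_iff hIab₀] at hIab
  rw [← hIa, ← hIb, ← hIab] at him
  refine mul_left_cancel₀ hm₀ ?_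
  linear_combination -him

variable {R E : ℝ} {z₀ : ℂ}

theorem tendsto_inv_Ifun_freeConv (h : IsSubordPair μa μb ωa ωb)
    (hconv : IsFreeConv μa μb ωb μab) (hR : ∀ᵐ x ∂μb, |x| ≤ R) (hE : IsRegularPoint μa E)
    (hE₀ : stT μa E = 0) (hωb : Tendsto ωb (𝓝[UHP] z₀) (𝓝 E)) :
    Tendsto (fun z => (Ifun μab z)⁻¹) (𝓝[UHP] z₀) (𝓝 ((Ifun μa E)⁻¹ - Var[id; μb])) := by
  have hIa : Tendsto (fun z => (Ifun μa (ωb z))⁻¹) (𝓝[UHP] z₀) (𝓝 (Ifun μa E)⁻¹) :=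
    (hE.continuousAt_Ifun.tendsto.comp hωb).inv₀ hE.Ifun_pos.ne'
  have hVar := (tendsto_inv_norm_stT_sq_sub_inv_Ifun_cobounded hR).comp
    (h.tendsto_fst_cobounded hE hE₀ hωb)
  refine (hIa.sub hVar).congr' ?_
  filter_upwards [self_mem_nhdsWithin] with z hz
  exact (h.inv_Ifun_freeConv hconv hz).symm

theorem variance_le_inv_Ifun (h : IsSubordPair μa μb ωa ωb)
    (hconv : IsFreeConv μa μb ωb μab) (hR : ∀ᵐ x ∂μb, |x| ≤ R) (hE : IsRegularPoint μa E)
    (hE₀ : stT μa E = 0) (hz₀ : z₀ ∈ CUHP) (hωb : Tendsto ωb (𝓝[UHP] z₀) (𝓝 E)) :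
    Var[id; μb] ≤ (Ifun μa E)⁻¹ := by
  have := nhdsWithin_UHP_neBot hz₀
  have hlim := h.tendsto_inv_Ifun_freeConv hconv hR hE hE₀ hωb
  refine sub_nonneg.1 (ge_of_tendsto' hlim fun z => ?_)
  exact inv_nonneg.2 (integral_nonneg fun x => inv_nonneg.2 (Complex.normSq_nonneg _))

theorem notMem_msupp_freeConv {x : ℝ} (h : IsSubordPair μa μb ωa ωb)
    (hconv : IsFreeConv μa μb ωb μab) (hR : ∀ᵐ x ∂μb, |x| ≤ R) (hE : IsRegularPoint μa E)
    (hE₀ : stT μa E = 0) (hωb : Tendsto ωb (𝓝[UHP] (x : ℂ)) (𝓝 E))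
    (hlt : Var[id; μb] < (Ifun μa E)⁻¹) : x ∉ msupp μab := by
  have := hconv.1
  have hlim := (h.tendsto_inv_Ifun_freeConv hconv hR hE hE₀ hωb).inv₀ (sub_pos.2 hlt).ne'
  simp only [inv_inv] at hlim
  exact notMem_msupp_of_Ifun_le (hlim.eventually_le_const (lt_add_one _))

end IsSubordPair

/-! ### The boundary fixed point -/

namespace ExtendsToRP

variable {ω : ℂ → ℂ} {Ω : ℂ → OnePoint ℂ} {z₀ : ℂ}

theorem tendsto_coe (h : ExtendsToRP ω Ω) (hz₀ : z₀ ∈ CUHP) :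
    Tendsto (fun z => (ω z : OnePoint ℂ)) (𝓝[UHP] z₀) (𝓝 (Ω z₀)) :=
  ((h.1 z₀ hz₀).mono_left (nhdsWithin_mono z₀ UHP_subset_CUHP)).congr'
    (eventually_nhdsWithin_of_forall h.2)

theorem tendsto_of_eq_coe (h : ExtendsToRP ω Ω) (hz₀ : z₀ ∈ CUHP) {c : ℂ} (hc : Ω z₀ = c) :
    Tendsto ω (𝓝[UHP] z₀) (𝓝 c) :=
  OnePoint.isOpenEmbedding_coe.isInducing.tendsto_nhds_iff.2 (hc ▸ h.tendsto_coe hz₀)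

theorem exists_mem_eq_coe (h : ExtendsToRP ω Ω) (hz₀ : z₀ ∈ CUHP) {K : Set ℂ} (hK : IsCompact K)
    (hω : ∃ᶠ z in 𝓝[UHP] z₀, ω z ∈ K) : ∃ c ∈ K, Ω z₀ = c := by
  have hclosed : IsClosed (((↑) : ℂ → OnePoint ℂ) '' K) :=
    (hK.image OnePoint.continuous_coe).isClosed
  obtain ⟨c, hcK, hc⟩ := hclosed.mem_of_frequently_of_tendsto
    (hω.mono fun z hz => mem_image_of_mem _ hz) (h.tendsto_coe hz₀)
  exact ⟨c, hcK, hc.symm⟩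

end ExtendsToRP

theorem variance_id_pos {μ : Measure ℝ} [IsProbabilityMeasure μ] [NullSingletonClass μ]
    (hμ : MemLp id 2 μ) : 0 < Var[id; μ] := by
  have hI : Complex.I ∈ UHP := by simp [UHP]
  refine (variance_nonneg _ _).lt_of_ne' fun h => ?_
  have hlt := norm_nrT_sub_add_mean_sq_mul_im_lt hμ hI
  rw [h, mul_zero, Complex.I_im, mul_one] at hlt
  exact hlt.not_ge (sq_nonneg _)

-- Applied with `u + i v = ω_β(z) - E`, `t = Im ω_α(z)`, `η = Im z`, `σ = Var μ_β` and
-- `p = μ̂_α({E})`.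
theorem sq_le_sq_and_le_of_subordination_ineq {u v t η σ p : ℝ} (hη : 0 < η) (hv : 0 < v)
    (ht : 0 < t) (hσ : 0 < σ) (hσp : σ ≤ p) (hb : (u ^ 2 + (v - η) ^ 2) * t < (v - η) * σ)
    (ha : p * v ≤ (t - η) * (u ^ 2 + v ^ 2)) : u ^ 2 ≤ v ^ 2 ∧ u ^ 2 + (v - η) ^ 2 ≤ p := by
  set Q := u ^ 2 + (v - η) ^ 2
  set D := u ^ 2 + v ^ 2
  have hp : 0 < p := hσ.trans_le hσp
  have hQ : 0 ≤ Q := by positivity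
  have hD : 0 < D := by positivity
  have hvη : 0 < v - η := pos_of_mul_pos_left ((mul_nonneg hQ ht.le).trans_lt hb) hσ.le
  have hQt : Q * t ≤ (v - η) * p := hb.le.trans (mul_le_mul_of_nonneg_left hσp hvη.le)
  have hmul : η * (Q * D) ≤ η * (p * (v ^ 2 - u ^ 2 - v * η)) := by
    calc η * (Q * D) = D * (Q * t) - Q * ((t - η) * D) := by ring
      _ ≤ D * ((v - η) * p) - Q * (p * v) :=
        sub_le_sub (mul_le_mul_of_nonneg_left hQt hD.le) (mul_le_mul_of_nonneg_left ha hQ)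
      _ = η * (p * (v ^ 2 - u ^ 2 - v * η)) := by ring
  have hQD : Q * D ≤ p * (v ^ 2 - u ^ 2) := by
    refine (le_of_mul_le_mul_left hmul hη).trans (mul_le_mul_of_nonneg_left ?_ hp.le)
    exact sub_le_self _ (mul_pos hv hη).le
  refine ⟨sub_nonneg.1 (nonneg_of_mul_nonneg_right ((mul_nonneg hQ hD.le).trans hQD) hp), ?_⟩
  refine le_of_mul_le_mul_right (hQD.trans (mul_le_mul_of_nonneg_left ?_ hp.le)) hD
  linarith [sq_nonneg u]

section FixedPoint

variable {μa μb ν : Measure ℝ} [IsProbabilityMeasure μb] [NullSingletonClass μb] {E : ℝ}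

theorem subordination_ineq (hμb : MemLp id 2 μb) (hν : IsNevanHat μa ν) {a b : ℂ} {η : ℝ}
    (ha : a ∈ UHP) (hb : b ∈ UHP)
    (heq_a : a + b - ((E + ∫ x, x ∂μb : ℝ) + η * Complex.I) = nrT μa b)
    (heq_b : a + b - ((E + ∫ x, x ∂μb : ℝ) + η * Complex.I) = nrT μb a) :
    ((b.re - E) ^ 2 + (b.im - η) ^ 2) * a.im < (b.im - η) * Var[id; μb] ∧
      ν.real {E} * b.im ≤ (a.im - η) * ((b.re - E) ^ 2 + b.im ^ 2) := by
  have hJulia := norm_nrT_sub_add_mean_sq_mul_im_lt hμb ha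
  have hNev := hν.measureReal_singleton_mul_im_le E hb
  rw [← heq_b] at hJulia
  rw [← heq_a] at hNev
  simp only [Complex.sq_norm, Complex.normSq_apply, Complex.add_re, Complex.add_im,
    Complex.sub_re, Complex.sub_im, Complex.mul_re, Complex.mul_im, Complex.ofReal_re,
    Complex.ofReal_im, Complex.I_re, Complex.I_im] at hJulia hNev
  ring_nf at hJulia hNev ⊢
  exact ⟨hJulia, hNev⟩

theorem nrT_ne_nrT_of_variance_le (hμb : MemLp id 2 μb) (hν : IsNevanHat μa ν)
    (hle : Var[id; μb] ≤ ν.real {E}) {a b : ℂ} (ha : a ∈ UHP) (hb : b ∈ UHP)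
    (heq : a + b - (E + ∫ x, x ∂μb : ℝ) = nrT μa b) : nrT μa b ≠ nrT μb a := fun h => by
  obtain ⟨hJulia, hNev⟩ := subordination_ineq (η := 0) hμb hν ha hb
    (by simpa using heq) (by simpa [← h] using heq)
  rw [sub_zero] at hJulia hNev
  have : b.im * Var[id; μb] ≤ b.im * ν.real {E} := mul_le_mul_of_nonneg_left hle (le_of_lt hb)
  linarith

/-- The part of the closed cone with apex `E` and half-angle `π / 4` about the vertical in which
`ω_β` is trapped when approaching `E` vertically. -/
def truncatedCone (E r : ℝ) : Set ℂ := {w | |w.re - E| ≤ w.im} ∩ Metric.closedBall (E : ℂ) r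

theorem isCompact_truncatedCone (E r : ℝ) : IsCompact (truncatedCone E r) :=
  (isCompact_closedBall (E : ℂ) r).inter_left (isClosed_le (by fun_prop) Complex.continuous_im)

theorem eq_of_mem_truncatedCone {r : ℝ} {w : ℂ} (hw : w ∈ truncatedCone E r) (him : w.im ≤ 0) :
    w = E := by
  have hre : |w.re - E| ≤ 0 := hw.1.trans him
  refine Complex.ext (sub_eq_zero.1 (abs_nonpos_iff.1 hre)) ?_
  exact him.antisymm ((abs_nonneg _).trans hw.1)

variable {ωa ωb : ℂ → ℂ} {Ωb : ℂ → OnePoint ℂ}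

theorem IsSubordPair.snd_mem_truncatedCone (hsub : IsSubordPair μa μb ωa ωb)
    (hμb : MemLp id 2 μb) (hν : IsNevanHat μa ν) (hle : Var[id; μb] ≤ ν.real {E}) {η : ℝ}
    (hη : 0 < η) :
    ωb ((E + ∫ x, x ∂μb : ℝ) + η * Complex.I) ∈ truncatedCone E (√(ν.real {E}) + η) := by
  have hz : (((E + ∫ x, x ∂μb : ℝ) : ℂ) + η * Complex.I) ∈ UHP := by simpa [UHP] using hη
  set z : ℂ := ((E + ∫ x, x ∂μb : ℝ) : ℂ) + η * Complex.I
  have hb : 0 < (ωb z).im := hsub.maps_b z hz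
  obtain ⟨hJulia, hNev⟩ := subordination_ineq hμb hν (hsub.maps_a z hz) hb (hsub.eqn_a z hz)
    (hsub.eqn_b z hz)
  obtain ⟨hcone, hball⟩ := sq_le_sq_and_le_of_subordination_ineq hη hb (hsub.maps_a z hz)
    (variance_id_pos hμb) hle hJulia hNev
  refine ⟨abs_le_of_sq_le_sq hcone hb.le, ?_⟩
  have hnorm : ‖ωb z - (E + η * Complex.I)‖ ≤ √(ν.real {E}) := by
    refine Real.le_sqrt_of_sq_le (le_of_eq_of_le ?_ hball)
    rw [Complex.sq_norm, Complex.normSq_apply]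
    simp [sq]
  rw [Metric.mem_closedBall, dist_eq_norm]
  calc ‖ωb z - E‖ = ‖ωb z - (E + η * Complex.I) + η * Complex.I‖ := by ring_nf
    _ ≤ √(ν.real {E}) + η := (norm_add_le _ _).trans
        (add_le_add hnorm (by simp [abs_of_pos hη]))

theorem ExtendsToRP.apply_add_mean_eq [IsProbabilityMeasure μa]
    (hsub : IsSubordPair μa μb ωa ωb) (hΩb : ExtendsToRP ωb Ωb) (hμb : MemLp id 2 μb)
    (hν : IsNevanHat μa ν) (hle : Var[id; μb] ≤ ν.real {E}) :
    Ωb (E + ∫ x, x ∂μb : ℝ) = (E : ℂ) := by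
  set z₀ : ℝ := E + ∫ x, x ∂μb
  have hz₀ : (z₀ : ℂ) ∈ CUHP := (Complex.ofReal_im z₀).ge
  have hpath : ∃ᶠ z in 𝓝[UHP] (z₀ : ℂ), ωb z ∈ truncatedCone E (√(ν.real {E}) + 1) := by
    refine (tendsto_add_mul_I z₀).frequently (Eventually.frequently ?_)
    filter_upwards [Ioc_mem_nhdsGT zero_lt_one] with η hη
    obtain ⟨hcone, hball⟩ := hsub.snd_mem_truncatedCone hμb hν hle hη.1
    exact ⟨hcone, Metric.closedBall_subset_closedBall (by gcongr; exact hη.2) hball⟩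
  obtain ⟨b, hb, hΩ⟩ := hΩb.exists_mem_eq_coe hz₀ (isCompact_truncatedCone _ _) hpath
  suffices him : b.im ≤ 0 by rw [hΩ, eq_of_mem_truncatedCone hb him]
  by_contra! hpos
  have ha : nrT μa b - b + z₀ ∈ UHP := by
    have hNev := hν.measureReal_singleton_mul_im_le E hpos
    have : 0 < ν.real {E} * b.im := mul_pos ((variance_id_pos hμb).trans_le hle) hpos
    simpa [UHP] using pos_of_mul_pos_left (this.trans_le hNev) (sq_nonneg _)
  exact nrT_ne_nrT_of_variance_le hμb hν hle ha hpos (by ring)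
    (hsub.nrT_eq_nrT_of_tendsto hz₀ hpos ha (hΩb.tendsto_of_eq_coe hz₀ hΩ))

end FixedPoint

/-! ### The range of `ω_β` and the support of `μ_α ⊞ μ_β` -/

namespace Assumption2

variable {μ : Measure ℝ} {n : ℕ} {Am Ap : Fin n → ℝ} {ρ : ℝ → ℝ}

theorem nullSingletonClass (h : Assumption2 μ n Am Ap ρ) : NullSingletonClass μ := by
  rw [h.ac]
  infer_instance

theorem isBounded_msupp (h : Assumption2 μ n Am Ap ρ) : Bornology.IsBounded (msupp μ) := by
  rw [h.supp_eq]
  exact (isCompact_iUnion fun _ => isCompact_Icc).isBounded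

theorem variance_id_eq_integral_sq (h : Assumption2 μ n Am Ap ρ) :
    Var[id; μ] = ∫ x, x ^ 2 ∂μ :=
  variance_of_integral_eq_zero aemeasurable_id h.centered

end Assumption2

theorem atom_in_range_of_subordination_general {μa μb μab ν : Measure ℝ}
    [IsProbabilityMeasure μa] [IsProbabilityMeasure μb] [NullSingletonClass μb]
    (hμb : Bornology.IsBounded (msupp μb)) (hν : IsNevanHat μa ν) {ωa ωb : ℂ → ℂ}
    (hsub : IsSubordPair μa μb ωa ωb) (hconv : IsFreeConv μa μb ωb μab) {Ωb : ℂ → OnePoint ℂ}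
    (hΩb : ExtendsToRP ωb Ωb) {E : ℝ} (hE : E ∉ msupp μa) (hE₀ : stTR μa E = 0) :
    (ν.real {E} < Var[id; μb] → ¬ ∃ z : ℂ, z.im = 0 ∧ Ωb z = (E : ℂ)) ∧
    (Var[id; μb] < ν.real {E} →
      (∃ z : ℂ, z.im = 0 ∧ Ωb z = (E : ℂ)) ∧ E + ∫ x, x ∂μb ∉ msupp μab) ∧
    (Var[id; μb] = ν.real {E} → ∃ z : ℂ, z.im = 0 ∧ Ωb z = (E : ℂ)) := by
  obtain ⟨R, hR⟩ := exists_ae_abs_le_of_isBounded_msupp hμb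
  have hreg : IsRegularPoint μa E := .of_notMem_msupp hE
  have hzero : stT μa E = 0 := by rw [stT_ofReal, hE₀, Complex.ofReal_zero]
  have hatom : ν.real {E} = (Ifun μa E)⁻¹ := hν.measureReal_singleton hreg hzero
  have hfix (hle : Var[id; μb] ≤ ν.real {E}) : Ωb (E + ∫ x, x ∂μb : ℝ) = (E : ℂ) :=
    hΩb.apply_add_mean_eq hsub (MemLp.of_bound aestronglyMeasurable_id R hR) hν hle
  have hrange (hle : Var[id; μb] ≤ ν.real {E}) : ∃ z : ℂ, z.im = 0 ∧ Ωb z = (E : ℂ) :=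
    ⟨_, Complex.ofReal_im _, hfix hle⟩
  refine ⟨fun hlt ⟨z, hz, hΩ⟩ => ?_, fun hlt => ⟨hrange hlt.le, ?_⟩, fun heq => hrange heq.le⟩
  · have hωb := hΩb.tendsto_of_eq_coe hz.ge hΩ
    exact (hsub.variance_le_inv_Ifun hconv hR hreg hzero hz.ge hωb).not_gt (hatom ▸ hlt)
  · have hωb := hΩb.tendsto_of_eq_coe (Complex.ofReal_im _).ge (hfix hlt.le)
    exact hsub.notMem_msupp_freeConv hconv hR hreg hzero hωb (hatom ▸ hlt)

/-- Whether an atom `E^α` of `μ̂_α` belongs to the range on ℝ of the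
continuous extension of `ω_β` is decided by comparing `∫ x² dμ_β` with `μ̂_α({E^α})`. -/
theorem atom_in_range_of_subordination
    (μa μb μab μhata : Measure ℝ) (na nb : ℕ)
    (Am Ap : Fin na → ℝ) (Bm Bp : Fin nb → ℝ) (ρa ρb : ℝ → ℝ)
    (hμa : Assumption2 μa na Am Ap ρa)
    (hμb : Assumption2 μb nb Bm Bp ρb)
    (hhata : IsNevanHat μa μhata)
    (ωa ωb : ℂ → ℂ) (hsub : IsSubordPair μa μb ωa ωb)
    (hconv : IsFreeConv μa μb ωb μab)
    (Ωa Ωb : ℂ → OnePoint ℂ)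
    (hΩa : ExtendsToRP ωa Ωa) (hΩb : ExtendsToRP ωb Ωb)
    -- E^α: an atom of μ̂_α, i.e. a zero of m_{μ_α} at positive distance from supp(μ_α)
    (Eα : ℝ) (hEα₁ : 0 < Metric.infDist Eα (msupp μa))
    (hEα₂ : stTR μa Eα = 0) (hEα₃ : μhata {Eα} ≠ 0) :
    ((∫ x, x ^ 2 ∂μb) > (μhata {Eα}).toReal →
      ¬ ∃ z : ℂ, z.im = 0 ∧ Ωb z = ((Eα : ℂ) : OnePoint ℂ)) ∧
    ((∫ x, x ^ 2 ∂μb) < (μhata {Eα}).toReal →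
      (∃ z : ℂ, z.im = 0 ∧ Ωb z = ((Eα : ℂ) : OnePoint ℂ)) ∧ Eα ∉ msupp μab) ∧
    ((∫ x, x ^ 2 ∂μb) = (μhata {Eα}).toReal →
      ∃ z : ℂ, z.im = 0 ∧ Ωb z = ((Eα : ℂ) : OnePoint ℂ)) := by
  have := hμa.prob
  have := hμb.prob
  have := hμb.nullSingletonClass
  have hE : Eα ∉ msupp μa := fun h => hEα₁.ne' (Metric.infDist_zero_of_mem h)
  simpa [hμb.variance_id_eq_integral_sq, hμb.centered, measureReal_def] using
    atom_in_range_of_subordination_general hμb.isBounded_msupp hhata hsub hconv hΩb hE hEα₂
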